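/- Suppose g is monotone in the sense ⟨g(y₁) − g(y₂), y₁ − y₂⟩ ≤ 0 for all y₁, y₂ ∈ Ω, and L-Lipschitz: ‖g(y₁) − g(y₂)‖ ≤ L‖y₁ − y₂‖ for all y₁, y₂ ∈ Ω. Let y* ∈ Ω solve the variational inequality ⟨g(y*), y − y*⟩ ≤ 0 for all y ∈ Ω. Let t > 0, y_s ∈ Ω, and define the extra pseudo-gradient step ŷ_s = P_Ω(y_s + t·g(y_s)), y_{s+1} = P_Ω(y_s + t·g(ŷ_s)). Then ‖y_{s+1} − y*‖² + (1 − 2(tL)²)‖y_s − ŷ_s‖² + ‖ŷ_s − y_{s+1}‖² ≤ ‖y_s − y*‖². -/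

import Mathlib

open Matrix Filter
open scoped BigOperators

noncomputable section

/-- Vectors in ℝ^k. -/
abbrev Vec (k : ℕ) := Fin k → ℝ

/-- Standard Euclidean inner product on ℝ^k. -/
def ip {k : ℕ} (u v : Vec k) : ℝ := ∑ i, u i * v i

/-- Standard Euclidean norm on ℝ^k. -/
def nrm {k : ℕ} (u : Vec k) : ℝ := Real.sqrt (ip u u)

/-- The space ℝⁿ × ℝⁿ × ℝᵐ of triples y = (x, λ, v). -/
abbrev Triple (n m : ℕ) := Vec n × Vec n × Vec m

/-- Euclidean inner product on the triple space. -/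
def ipT {n m : ℕ} (y z : Triple n m) : ℝ :=
  ip y.1 z.1 + ip y.2.1 z.2.1 + ip y.2.2 z.2.2

/-- Euclidean norm on the triple space. -/
def nrmT {n m : ℕ} (y : Triple n m) : ℝ := Real.sqrt (ipT y y)

/-- Ω = ℝ₊ⁿ × ℝ₊ⁿ × ℝ₊ᵐ. -/
def Om (n m : ℕ) : Set (Triple n m) :=
  {y | (∀ j, 0 ≤ y.1 j) ∧ (∀ j, 0 ≤ y.2.1 j) ∧ (∀ i, 0 ≤ y.2.2 i)}

/-- The operator g(x, λ, v) = ((I − A)ᵀλ − p(x) − Bᵀv, c(λ) − (I − A)x, Bx − r(v)). -/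
def gOp {n m : ℕ} (A : Matrix (Fin n) (Fin n) ℝ) (B : Matrix (Fin m) (Fin n) ℝ)
    (p c : Vec n → Vec n) (r : Vec m → Vec m) (y : Triple n m) : Triple n m :=
  ((1 - A)ᵀ *ᵥ y.2.1 - p y.1 - Bᵀ *ᵥ y.2.2,
   c y.2.1 - (1 - A) *ᵥ y.1,
   B *ᵥ y.1 - r y.2.2)

/-- P_Ω : componentwise positive part (Euclidean projection onto Ω). -/
def projOm {n m : ℕ} (y : Triple n m) : Triple n m :=
  (fun j => max (y.1 j) 0, fun j => max (y.2.1 j) 0, fun i => max (y.2.2 i) 0)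

theorem ip_comm' {k : ℕ} (u v : Vec k) : ip u v = ip v u := by
  simp only [ip, mul_comm]

theorem ip_add_left' {k : ℕ} (u v w : Vec k) : ip (u + v) w = ip u w + ip v w := by
  simp only [ip, Pi.add_apply, add_mul, Finset.sum_add_distrib]

theorem ip_smul_left' {k : ℕ} (a : ℝ) (u w : Vec k) : ip (a • u) w = a * ip u w := by
  simp only [ip, Pi.smul_apply, smul_eq_mul, mul_assoc, Finset.mul_sum]

theorem ip_sub_left' {k : ℕ} (u v w : Vec k) : ip (u - v) w = ip u w - ip v w := by
  simp only [ip, Pi.sub_apply, sub_mul, Finset.sum_sub_distrib]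

theorem ip_self_nonneg' {k : ℕ} (u : Vec k) : 0 ≤ ip u u :=
  Finset.sum_nonneg fun i _ => mul_self_nonneg (u i)

theorem ipT_comm' {n m : ℕ} (u v : Triple n m) : ipT u v = ipT v u := by
  simp only [ipT, ip_comm' u.1, ip_comm' u.2.1, ip_comm' u.2.2]

theorem ipT_add_left' {n m : ℕ} (u v w : Triple n m) :
    ipT (u + v) w = ipT u w + ipT v w := by
  simp only [ipT, Prod.fst_add, Prod.snd_add, ip_add_left']; ring

theorem ipT_sub_left' {n m : ℕ} (u v w : Triple n m) :
    ipT (u - v) w = ipT u w - ipT v w := by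
  simp only [ipT, Prod.fst_sub, Prod.snd_sub, ip_sub_left']; ring

theorem ipT_smul_left' {n m : ℕ} (a : ℝ) (u w : Triple n m) :
    ipT (a • u) w = a * ipT u w := by
  simp only [ipT, Prod.smul_fst, Prod.smul_snd, ip_smul_left']; ring

theorem ipT_sub_right' {n m : ℕ} (u v w : Triple n m) :
    ipT w (u - v) = ipT w u - ipT w v := by
  rw [ipT_comm', ipT_sub_left', ipT_comm' u, ipT_comm' v]

theorem ipT_smul_right' {n m : ℕ} (a : ℝ) (u w : Triple n m) :
    ipT w (a • u) = a * ipT w u := by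
  rw [ipT_comm', ipT_smul_left', ipT_comm' u]

theorem ipT_self_nonneg' {n m : ℕ} (u : Triple n m) : 0 ≤ ipT u u :=
  add_nonneg (add_nonneg (ip_self_nonneg' _) (ip_self_nonneg' _)) (ip_self_nonneg' _)

theorem nrmT_sq' {n m : ℕ} (u : Triple n m) : nrmT u ^ 2 = ipT u u :=
  Real.sq_sqrt (ipT_self_nonneg' u)

theorem projOm_mem' {n m : ℕ} (u : Triple n m) : projOm u ∈ Om n m :=
  ⟨fun _ => le_max_right _ _, fun _ => le_max_right _ _, fun _ => le_max_right _ _⟩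

theorem ip_proj' {k : ℕ} (u y : Vec k) (hy : ∀ i, 0 ≤ y i) :
    ip (u - fun j => max (u j) 0) (y - fun j => max (u j) 0) ≤ 0 := by
  refine Finset.sum_nonpos fun i _ => ?_
  simp only [Pi.sub_apply]
  rcases le_total (u i) 0 with h | h
  · rw [max_eq_right h]
    nlinarith [hy i]
  · rw [max_eq_left h]
    simp

theorem proj_ineq' {n m : ℕ} (u y : Triple n m) (hy : y ∈ Om n m) :
    ipT (u - projOm u) (y - projOm u) ≤ 0 :=
  add_nonpos (add_nonpos (ip_proj' _ _ hy.1) (ip_proj' _ _ hy.2.1)) (ip_proj' _ _ hy.2.2)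

/-- the key one-step inequality of the extra pseudo-gradient method:
‖y_{s+1} − y*‖² + (1 − 2(tL)²)‖y_s − ŷ_s‖² + ‖ŷ_s − y_{s+1}‖² ≤ ‖y_s − y*‖². -/
theorem stmt13 {n m : ℕ} (hn : 0 < n) (hm : 0 < m)
    (A : Matrix (Fin n) (Fin n) ℝ) (B : Matrix (Fin m) (Fin n) ℝ)
    (p c : Vec n → Vec n) (r : Vec m → Vec m)
    (L : ℝ)
    (hmono : ∀ y₁ ∈ Om n m, ∀ y₂ ∈ Om n m,
      ipT (gOp A B p c r y₁ - gOp A B p c r y₂) (y₁ - y₂) ≤ 0)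
    (hlip : ∀ y₁ ∈ Om n m, ∀ y₂ ∈ Om n m,
      nrmT (gOp A B p c r y₁ - gOp A B p c r y₂) ≤ L * nrmT (y₁ - y₂))
    (ys : Triple n m) (hys : ys ∈ Om n m)
    (hVI : ∀ y ∈ Om n m, ipT (gOp A B p c r ys) (y - ys) ≤ 0)
    (t : ℝ) (ht : 0 < t)
    (yc : Triple n m) (hyc : yc ∈ Om n m)
    (yh ynext : Triple n m)
    (hyh : yh = projOm (yc + t • gOp A B p c r yc))
    (hynext : ynext = projOm (yc + t • gOp A B p c r yh)) :
    nrmT (ynext - ys) ^ 2 + (1 - 2 * (t * L) ^ 2) * nrmT (yc - yh) ^ 2 +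
      nrmT (yh - ynext) ^ 2 ≤ nrmT (yc - ys) ^ 2 := by
  have hh : yh ∈ Om n m := hyh ▸ projOm_mem' _
  have hnx : ynext ∈ Om n m := hynext ▸ projOm_mem' _
  have P1 := proj_ineq' (yc + t • gOp A B p c r yh) ys hys
  have P1' := proj_ineq' (yc + t • gOp A B p c r yh) yh hh
  have P2 := proj_ineq' (yc + t • gOp A B p c r yc) ynext hnx
  rw [← hynext] at P1 P1'
  rw [← hyh] at P2
  have M := hmono yh hh ys hys
  have V := hVI yh hh
  have Lp := pow_le_pow_left₀ (Real.sqrt_nonneg _) (hlip yh hh yc hyc) 2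
  change nrmT _ ^ 2 ≤ _ at Lp
  rw [mul_pow, nrmT_sq', nrmT_sq'] at Lp
  have Lt := mul_le_mul_of_nonneg_left Lp (sq_nonneg t)
  simp only [nrmT_sq']
  have Y := ipT_self_nonneg' (t • (gOp A B p c r yh - gOp A B p c r yc) - (ynext - yh))
  generalize gOp A B p c r yh = gh at *
  generalize gOp A B p c r yc = gc at *
  generalize gOp A B p c r ys = gs at *
  have MV : t * ipT gh (yh - ys) ≤ 0 := by
    apply mul_nonpos_of_nonneg_of_nonpos ht.le
    rw [ipT_sub_left'] at M
    linarith
  have hcs : ipT (yc - yh) (yc - yh) = ipT (yh - yc) (yh - yc) := by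
    simp only [ipT_sub_left', ipT_sub_right']; ring
  rw [hcs]
  have E : (1 - 2 * (t * L) ^ 2) * ipT (yh - yc) (yh - yc) = ipT (yh - yc) (yh - yc)
    - 2 * (t ^ 2 * (L ^ 2 * ipT (yh - yc) (yh - yc))) := by ring
  rw [E]
  generalize t ^ 2 * (L ^ 2 * ipT (yh - yc) (yh - yc)) = K at *
  clear E hcs M V Lp hmono hlip hVI hyh hynext
  simp only [ipT_sub_left', ipT_sub_right', ipT_add_left', ipT_smul_left',
    ipT_smul_right'] at *
  simp only [ipT_comm' ys yc, ipT_comm' ynext yc, ipT_comm' yh yc, ipT_comm' ynext yh,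
    ipT_comm' ynext ys] at *
  simp only [ipT_comm' ynext gh, ipT_comm' yh gh, ipT_comm' ynext gc, ipT_comm' yh gc,
    ipT_comm' gc gh] at *
  nlinarith
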